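/- Let q > 0, let 1 < α < β, and set r = √((α−1)/(β−1)). For every holomorphic f on the unit disk 𝔻 with ∫_𝔻 |f(z)|^q dA_β(z) < ∞, one has ((α−1)/π) ∫_𝔻 |f(rz)|^q (1−|z|²)^{α−2} dA(z) ≤ ((β−1)/π) ∫_𝔻 |f(z)|^q (1−|z|²)^{β−2} dA(z). -/

import Mathlib

open MeasureTheory Metric

/-! The substitution `t = (1 - |z|²) ^ (γ - 1)` turns the integral of a function against `dA_γ` into
the integral over `t ∈ (0, 1)` of its mean on the circle of radius
`R_γ(t) = √(1 - t ^ (1 / (γ - 1)))`.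
The dilation by `r` therefore compares, for each `t`, the means of `|f| ^ q` on the circles of radii
`r R_α(t)` and `R_β(t)`. Bernoulli's inequality gives `r R_α(t) ≤ R_β(t)`, and the circle means of
`|f| ^ q` increase with the radius because `|f| ^ q` is subharmonic.

Monotonicity of the means follows from the maximum principle applied to the radial symmetrization of
`max |f| ε ^ q`. The truncation at `ε` makes the sub-mean value inequality hold on all circles of
radius below a uniform bound: either `|f| ≤ ε` at the centre, or `f` stays close enough to its
central value to have a holomorphic power. -/

section

open Real Set Filter Topology

/-! ### Monotonicity of circle means -/

lemma circleAverage_lt_of_le_of_exists_lt {u : ℂ → ℝ} {c : ℂ} {R a : ℝ}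
    (hu : ContinuousOn u (sphere c |R|)) (hle : ∀ z ∈ sphere c |R|, u z ≤ a)
    (hlt : ∃ z ∈ sphere c |R|, u z < a) : circleAverage u c R < a := by
  obtain ⟨z, hz, hza⟩ := hlt
  obtain ⟨θ, hθ, rfl⟩ : z ∈ circleMap c R '' Ioc 0 (2 * π) := by rwa [image_circleMap_Ioc]
  have hcont : Continuous fun θ => u (circleMap c R θ) :=
    hu.comp_continuous (continuous_circleMap c R) (circleMap_mem_sphere' c R)
  rw [← circleAverage_const a c R, circleAverage_def, circleAverage_def, smul_eq_mul, smul_eq_mul]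
  gcongr
  exact intervalIntegral.integral_lt_integral_of_continuousOn_of_le_of_exists_lt two_pi_pos
    hcont.continuousOn continuousOn_const (fun θ _ => hle _ (circleMap_mem_sphere' c R θ))
    ⟨θ, Ioc_subset_Icc_self hθ, hza⟩

lemma exists_mem_frontier_isMaxOn_of_le_circleAverage {u : ℂ → ℝ} {K : Set ℂ} (hK : IsCompact K)
    (hne : K.Nonempty) (hu : ContinuousOn u K)
    (hsub : ∀ z ∈ interior K, ∃ r > 0, closedBall z r ⊆ K ∧ u z ≤ circleAverage u z r) :
    ∃ z ∈ frontier K, IsMaxOn u K z := by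
  obtain ⟨z₀, hz₀, hmax⟩ := hK.exists_isMaxOn hne hu
  have hcompact : IsCompact (K ∩ u ⁻¹' {u z₀}) :=
    hK.of_isClosed_subset (hu.preimage_isClosed_of_isClosed hK.isClosed isClosed_singleton)
      inter_subset_left
  -- Among all maximizers, one with the largest real part cannot be interior.
  obtain ⟨z, ⟨hzK, hz⟩, hre⟩ :=
    hcompact.exists_isMaxOn ⟨z₀, hz₀, rfl⟩ Complex.continuous_re.continuousOn
  rw [mem_preimage, mem_singleton_iff] at hz
  refine ⟨z, ?_, fun w hw => (hmax hw).trans_eq hz.symm⟩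
  by_contra hfr
  obtain ⟨r, hr, hball, hle⟩ := hsub z (by
    rw [hK.isClosed.frontier_eq] at hfr
    simpa [hzK] using hfr)
  have hsphere : sphere z |r| ⊆ K := by
    rw [abs_of_pos hr]
    exact sphere_subset_closedBall.trans hball
  have hmem : z + r ∈ sphere z |r| := by simp
  have hlt : u (z + r) < u z := by
    refine lt_of_le_of_ne ((hmax (hsphere hmem)).trans_eq hz.symm) fun heq => ?_
    have : (z + r).re ≤ z.re := hre ⟨hsphere hmem, heq.trans hz⟩
    simp only [Complex.add_re, Complex.ofReal_re] at this
    linarith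
  exact hle.not_gt <| circleAverage_lt_of_le_of_exists_lt (hu.mono hsphere)
    (fun w hw => (hmax (hsphere hw)).trans_eq hz.symm) ⟨_, hmem, hlt⟩

lemma circleAverage_comp_mul_left {E : Type*} [NormedAddCommGroup E] [NormedSpace ℝ E]
    (u : ℂ → E) (w z : ℂ) (r : ℝ) :
    circleAverage (fun ζ => u (w * ζ)) z r = circleAverage u (w * z) (‖w‖ * r) := by
  rw [circleAverage_def, circleAverage_eq_integral_add w.arg]
  congr! 4 with θ
  calc w * circleMap z r θ
      = w * z + (‖w‖ * Complex.exp (w.arg * Complex.I)) * (r * Complex.exp (θ * Complex.I)) := by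
        rw [Complex.norm_mul_exp_arg_mul_I, circleMap, mul_add]
    _ = circleMap (w * z) (‖w‖ * r) (θ + w.arg) := by
        rw [circleMap, Complex.ofReal_add, add_mul, Complex.exp_add]
        push_cast
        ring

lemma circleAverage_comm {E : Type*} [NormedAddCommGroup E] [NormedSpace ℝ E]
    {F : ℂ → ℂ → E} {c d : ℂ} {r s : ℝ}
    (hF : ContinuousOn (Function.uncurry F) (sphere c |r| ×ˢ sphere d |s|)) :
    circleAverage (fun z => circleAverage (F z) d s) c r =
      circleAverage (fun w => circleAverage (fun z => F z w) c r) d s := by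
  have hcont : Continuous (Function.uncurry fun φ θ => F (circleMap c r φ) (circleMap d s θ)) :=
    hF.comp_continuous (f := fun p : ℝ × ℝ => (circleMap c r p.1, circleMap d s p.2))
      (by fun_prop) fun p => ⟨circleMap_mem_sphere' c r p.1, circleMap_mem_sphere' d s p.2⟩
  simp only [circleAverage_def, intervalIntegral.integral_smul]
  simp only [intervalIntegral.integral_of_le two_pi_pos.le]
  rw [integral_integral_swap]
  rw [Measure.prod_restrict]
  exact (hcont.continuousOn.integrableOn_compact
    (isCompact_Icc.prod isCompact_Icc)).mono_set (prod_mono Ioc_subset_Icc_self Ioc_subset_Icc_self)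

lemma continuousOn_circleAverage {X E : Type*} [TopologicalSpace X] [NormedAddCommGroup E]
    [NormedSpace ℝ E] {F : X → ℂ → E} {S : Set X} {c : ℂ} {R : ℝ}
    (hF : ContinuousOn (Function.uncurry F) (S ×ˢ sphere c |R|)) :
    ContinuousOn (fun x => circleAverage (F x) c R) S := by
  rw [continuousOn_iff_continuous_domRestrict]
  refine .const_smul
    (intervalIntegral.continuous_parametric_intervalIntegral_of_continuous' ?_ _ _) _
  exact hF.comp_continuous (f := fun p : S × ℝ => (p.1.1, circleMap c R p.2)) (by fun_prop)
    fun p => ⟨p.1.2, circleMap_mem_sphere' c R p.2⟩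

lemma circleAverage_norm_le_circleAverage {u : ℂ → ℝ} {z : ℂ} {r : ℝ} (hr : 0 ≤ r)
    (hu : ContinuousOn u (closedBall 0 (‖z‖ + r)))
    (hsub : ∀ ζ ∈ sphere 0 ‖z‖, u ζ ≤ circleAverage u ζ r) :
    circleAverage u 0 ‖z‖ ≤ circleAverage (fun ζ => circleAverage u 0 ‖ζ‖) z r := by
  have hrot (ζ : ℂ) : circleAverage u 0 ‖ζ‖ = circleAverage (fun w => u (ζ * w)) 0 1 := by
    rw [circleAverage_comp_mul_left, mul_zero, mul_one]
  have hcont : ContinuousOn (Function.uncurry fun ζ w : ℂ => u (ζ * w))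
      (closedBall z r ×ˢ sphere 0 1) := by
    refine hu.comp (by fun_prop) fun p hp => ?_
    obtain ⟨hp₁, hp₂⟩ := hp
    rw [mem_closedBall_iff_norm] at hp₁
    rw [mem_sphere_zero_iff_norm] at hp₂
    rw [mem_closedBall_zero_iff, norm_mul, hp₂, mul_one]
    linarith [norm_le_norm_add_norm_sub' p.1 z]
  have hsphere : closedBall z r ×ˢ sphere 0 1 ⊇ sphere z |r| ×ˢ sphere (0 : ℂ) |1| := by
    rw [abs_of_nonneg hr, abs_one]
    exact prod_mono sphere_subset_closedBall subset_rfl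
  simp only [hrot]
  rw [circleAverage_comm (hcont.mono hsphere)]
  refine circleAverage_mono
    (ContinuousOn.circleIntegrable zero_le_one ?_) (ContinuousOn.circleIntegrable zero_le_one ?_)
    fun w hw => ?_
  · exact hcont.comp (f := fun w => (z, w)) (by fun_prop) fun w hw => ⟨mem_closedBall_self hr, hw⟩
  · refine continuousOn_circleAverage (F := fun w ζ => u (ζ * w)) ?_
    refine (hcont.mono hsphere).comp continuous_swap.continuousOn fun p hp => ⟨hp.2, ?_⟩
    simpa only [abs_one, Prod.snd_swap] using hp.1
  · rw [abs_one, mem_sphere_zero_iff_norm] at hw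
    simp_rw [mul_comm _ w]
    rw [circleAverage_comp_mul_left, hw, one_mul]
    exact hsub _ (by simp [hw])

lemma circleAverage_le_circleAverage_of_le_circleAverage {u : ℂ → ℝ} {s R δ : ℝ} (hs : 0 ≤ s)
    (hsR : s ≤ R) (hu : ContinuousOn u (closedBall 0 R)) (hδ : 0 < δ)
    (hsub : ∀ z r, 0 < r → r < δ → closedBall z r ⊆ closedBall 0 R → u z ≤ circleAverage u z r) :
    circleAverage u 0 s ≤ circleAverage u 0 R := by
  have hR : 0 ≤ R := hs.trans hsR
  have hcont : ContinuousOn (fun z : ℂ => circleAverage u 0 ‖z‖) (closedBall 0 R) := by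
    have hradius : ContinuousOn (circleAverage u 0) (Icc 0 R) := by
      refine .circleAverage (hu.mono fun z hz => ?_) fun r hr => hr.1
      simpa using hz
    exact hradius.comp continuous_norm.continuousOn fun z hz =>
      ⟨norm_nonneg z, mem_closedBall_zero_iff.1 hz⟩
  obtain ⟨w, hw, hmax⟩ := exists_mem_frontier_isMaxOn_of_le_circleAverage
    (isCompact_closedBall (0 : ℂ) R) (nonempty_closedBall.2 hR) hcont fun z hz => by
      rw [interior_closedBall', mem_ball_zero_iff] at hz
      obtain ⟨r, hr, hrlt⟩ := exists_between (lt_min hδ (sub_pos.2 hz))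
      obtain ⟨hrδ, hrR⟩ := lt_min_iff.1 hrlt
      have hsubset : ∀ ζ ∈ sphere (0 : ℂ) ‖z‖, closedBall ζ r ⊆ closedBall 0 R := fun ζ hζ =>
        closedBall_subset_closedBall' (by rw [mem_sphere.1 hζ]; linarith)
      exact ⟨r, hr, hsubset z (by simp), circleAverage_norm_le_circleAverage hr.le
        (hu.mono (closedBall_subset_closedBall (by linarith)))
        fun ζ hζ => hsub ζ r hr hrδ (hsubset ζ hζ)⟩
  rw [frontier_closedBall', mem_sphere_zero_iff_norm] at hw
  have hs_mem : (s : ℂ) ∈ closedBall 0 R := by simpa [abs_of_nonneg hs] using hsR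
  simpa [hw, abs_of_nonneg hs] using hmax hs_mem

lemma norm_circleAverage_le_circleAverage_norm {E : Type*} [NormedAddCommGroup E]
    [NormedSpace ℝ E] (f : ℂ → E) (c : ℂ) (R : ℝ) :
    ‖circleAverage f c R‖ ≤ circleAverage (fun z => ‖f z‖) c R := by
  rw [circleAverage_def, circleAverage_def, norm_smul, norm_of_nonneg (by positivity), smul_eq_mul]
  gcongr
  exact intervalIntegral.norm_integral_le_integral_norm two_pi_pos.le

lemma norm_rpow_le_circleAverage_of_norm_sub_lt {f : ℂ → ℂ} {c : ℂ} {R : ℝ} (q : ℝ)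
    (hf : DiffContOnCl ℂ f (ball c |R|))
    (hlt : ∀ z ∈ closedBall c |R|, ‖f z - f c‖ < ‖f c‖) :
    ‖f c‖ ^ q ≤ circleAverage (fun z => ‖f z‖ ^ q) c R := by
  have hc : 0 < ‖f c‖ := (norm_nonneg _).trans_lt (hlt c (mem_closedBall_self (abs_nonneg R)))
  have hslit : ∀ z ∈ closedBall c |R|, f z / f c ∈ Complex.slitPlane := fun z hz => by
    have hsmall : ‖f z / f c - 1‖ < 1 := by
      rw [div_sub_one (norm_pos_iff.1 hc), norm_div, div_lt_one hc]
      exact hlt z hz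
    simpa using Complex.mem_slitPlane_of_norm_lt_one hsmall
  -- A holomorphic branch of `f ^ q`, up to a constant of modulus one.
  let g : ℂ → ℂ := fun z => (‖f c‖ ^ q : ℝ) * (f z / f c) ^ (q : ℂ)
  have hg_norm (z : ℂ) : ‖g z‖ = ‖f z‖ ^ q := by
    rw [norm_mul, Complex.norm_cpow_real, Complex.norm_real, norm_of_nonneg (by positivity),
      ← mul_rpow hc.le (norm_nonneg _), norm_div, mul_div_cancel₀ _ hc.ne']
  have hpow : DiffContOnCl ℂ (fun z => (f z / f c) ^ (q : ℂ)) (ball c |R|) :=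
    ⟨(hf.differentiableOn.div_const _).cpow_const fun z hz => hslit z (ball_subset_closedBall hz),
      fun z hz => ((hf.continuousOn z hz).div_const _).cpow continuousWithinAt_const
        (hslit z (closure_ball_subset_closedBall hz))⟩
  have hg : DiffContOnCl ℂ g (ball c |R|) := hpow.const_smul ((‖f c‖ ^ q : ℝ) : ℂ)
  calc ‖f c‖ ^ q = ‖circleAverage g c R‖ := by rw [hg.circleAverage, hg_norm]
    _ ≤ circleAverage (fun z => ‖g z‖) c R := norm_circleAverage_le_circleAverage_norm g c R
    _ = circleAverage (fun z => ‖f z‖ ^ q) c R := by simp only [hg_norm]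

lemma max_norm_rpow_le_circleAverage {f : ℂ → ℂ} {c : ℂ} {R q ε : ℝ} (hq : 0 ≤ q) (hε : 0 < ε)
    (hf : DiffContOnCl ℂ f (ball c |R|))
    (hlt : ∀ z ∈ closedBall c |R|, ‖f z - f c‖ < ε) :
    max ‖f c‖ ε ^ q ≤ circleAverage (fun z => max ‖f z‖ ε ^ q) c R := by
  have hcont : ContinuousOn f (sphere c |R|) :=
    hf.continuousOn_ball.mono sphere_subset_closedBall
  have hint : CircleIntegrable (fun z => max ‖f z‖ ε ^ q) c R :=
    ContinuousOn.circleIntegrable'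
      ((hcont.norm.sup continuousOn_const).rpow_const fun _ _ => Or.inr hq)
  rcases le_total ‖f c‖ ε with hle | hge
  · rw [max_eq_right hle, ← circleAverage_const (ε ^ q) c R]
    refine circleAverage_mono (circleIntegrable_const _ _ _) hint fun z _ => ?_
    gcongr
    exact le_max_right _ _
  · rw [max_eq_left hge]
    calc ‖f c‖ ^ q ≤ circleAverage (fun z => ‖f z‖ ^ q) c R :=
          norm_rpow_le_circleAverage_of_norm_sub_lt q hf fun z hz => (hlt z hz).trans_le hge
      _ ≤ circleAverage (fun z => max ‖f z‖ ε ^ q) c R := by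
          refine circleAverage_mono (ContinuousOn.circleIntegrable' ?_) hint fun z _ => ?_
          · exact hcont.norm.rpow_const fun _ _ => Or.inr hq
          · gcongr
            exact le_max_left _ _

lemma circleAverage_max_norm_rpow_le {f : ℂ → ℂ} {s R q ε : ℝ} (hs : 0 ≤ s) (hsR : s ≤ R)
    (hq : 0 ≤ q) (hε : 0 < ε) (hf : DiffContOnCl ℂ f (ball 0 R)) :
    circleAverage (fun z => max ‖f z‖ ε ^ q) 0 s ≤
      circleAverage (fun z => max ‖f z‖ ε ^ q) 0 R := by
  have hcont : ContinuousOn f (closedBall 0 R) := hf.continuousOn_ball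
  obtain ⟨δ, hδ, hfδ⟩ := Metric.uniformContinuousOn_iff.1
    ((isCompact_closedBall (0 : ℂ) R).uniformContinuousOn_of_continuous hcont) ε hε
  refine circleAverage_le_circleAverage_of_le_circleAverage hs hsR ?_ hδ
    fun z r hr hrδ hsubset => ?_
  · exact (hcont.norm.sup continuousOn_const).rpow_const fun _ _ => Or.inr hq
  · rw [← abs_of_pos hr] at hrδ hsubset
    refine max_norm_rpow_le_circleAverage hq hε (hf.mono ?_) fun w hw => ?_
    · rw [← interior_closedBall', ← interior_closedBall']
      exact interior_mono hsubset
    · rw [← dist_eq_norm]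
      exact hfδ w (hsubset hw) z (hsubset (mem_closedBall_self (abs_nonneg r))) (hw.trans_lt hrδ)

theorem circleAverage_norm_rpow_le {f : ℂ → ℂ} {s R q : ℝ} (hs : 0 ≤ s) (hsR : s ≤ R)
    (hq : 0 ≤ q) (hf : DiffContOnCl ℂ f (ball 0 R)) :
    circleAverage (fun z => ‖f z‖ ^ q) 0 s ≤ circleAverage (fun z => ‖f z‖ ^ q) 0 R := by
  have hcont : ContinuousOn f (closedBall 0 R) := hf.continuousOn_ball
  have hlim : ∀ t ∈ Icc 0 R, Tendsto (fun ε : ℝ => circleAverage (fun z => max ‖f z‖ ε ^ q) 0 t)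
      (𝓝[>] 0) (𝓝 (circleAverage (fun z => ‖f z‖ ^ q) 0 t)) := fun t ht => by
    have hcont_t : ContinuousOn f (sphere 0 |t|) := hcont.mono <| by
      rw [abs_of_nonneg ht.1]
      exact sphere_subset_closedBall.trans (closedBall_subset_closedBall ht.2)
    have hcont_ε : ContinuousOn
        (fun ε : ℝ => circleAverage (fun z => max ‖f z‖ ε ^ q) 0 t) univ :=
      continuousOn_circleAverage <| ContinuousOn.rpow_const
        (.sup (hcont_t.comp continuousOn_snd fun p hp => hp.2).norm continuousOn_fst)
        fun _ _ => Or.inr hq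
    simpa only [max_eq_left (norm_nonneg _)] using
      (continuousOn_univ.1 hcont_ε).continuousWithinAt.tendsto (x := 0) (s := Ioi 0)
  exact le_of_tendsto_of_tendsto (hlim s ⟨hs, hsR⟩) (hlim R ⟨hs.trans hsR, le_rfl⟩)
    (eventually_mem_nhdsWithin.mono fun ε hε => circleAverage_max_norm_rpow_le hs hsR hq hε hf)

/-! ### Polar coordinates -/

lemma circleAverage_eq_setAverage_Ioo {E : Type*} [NormedAddCommGroup E] [NormedSpace ℝ E]
    (u : ℂ → E) (c : ℂ) (R : ℝ) :
    circleAverage u c R = ⨍ θ in Ioo (-π) π, u (circleMap c R θ) := by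
  rw [circleAverage_eq_integral_add (-π),
    intervalIntegral.integral_comp_add_right (fun θ => u (circleMap c R θ)), setAverage_eq,
    intervalIntegral.integral_of_le (by linarith [pi_pos]), integral_Ioc_eq_integral_Ioo]
  simp [two_mul, pi_pos.le]

/-- The average of an `ENNReal`-valued function over a circle, the Lebesgue-integral counterpart of
`Real.circleAverage`. The angle ranges over `(-π, π)` to match the polar coordinates of Mathlib. -/
noncomputable def lcircleAverage (H : ℂ → ENNReal) (c : ℂ) (R : ℝ) : ENNReal :=
  ⨍⁻ θ in Ioo (-π) π, H (circleMap c R θ) ∂volume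

lemma lcircleAverage_eq (H : ℂ → ENNReal) (c : ℂ) (R : ℝ) :
    lcircleAverage H c R =
      (∫⁻ θ in Ioo (-π) π, H (circleMap c R θ)) / ENNReal.ofReal (2 * π) := by
  rw [lcircleAverage, setLAverage_eq, volume_Ioo, sub_neg_eq_add, ← two_mul]

lemma lcircleAverage_congr {H₁ H₂ : ℂ → ENNReal} {c : ℂ} {R : ℝ}
    (h : EqOn H₁ H₂ (sphere c |R|)) : lcircleAverage H₁ c R = lcircleAverage H₂ c R := by
  simp only [lcircleAverage, h (circleMap_mem_sphere' c R _)]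

lemma lcircleAverage_const_mul {a : ENNReal} (ha : a ≠ ⊤) (H : ℂ → ENNReal) (c : ℂ) (R : ℝ) :
    lcircleAverage (fun z => a * H z) c R = a * lcircleAverage H c R := by
  rw [lcircleAverage_eq, lcircleAverage_eq, lintegral_const_mul' _ _ ha, mul_div_assoc]

lemma lcircleAverage_enorm_rpow {f : ℂ → ℂ} {c : ℂ} {R q : ℝ} (hq : 0 ≤ q)
    (hf : ContinuousOn f (sphere c |R|)) :
    lcircleAverage (fun z => ‖f z‖ₑ ^ q) c R =
      ENNReal.ofReal (circleAverage (fun z => ‖f z‖ ^ q) c R) := by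
  have hcont : Continuous fun θ => ‖f (circleMap c R θ)‖ ^ q :=
    (hf.comp_continuous (continuous_circleMap c R) (circleMap_mem_sphere' c R)).norm.rpow_const
      fun _ => Or.inr hq
  rw [circleAverage_eq_setAverage_Ioo, ofReal_setAverage, lcircleAverage, setLAverage_eq]
  · simp only [← ENNReal.ofReal_rpow_of_nonneg (norm_nonneg _) hq, ofReal_norm]
  · exact hcont.integrableOn_Icc.mono_set Ioo_subset_Icc_self
  · exact ae_of_all _ fun θ => by positivity

lemma lintegral_eq_lintegral_lcircleAverage {H : ℂ → ENNReal} (hH : Measurable H) :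
    ∫⁻ z, H z = ∫⁻ s in Ioi (0 : ℝ), ENNReal.ofReal (2 * π * s) * lcircleAverage H 0 s := by
  have hsymm (p : ℝ × ℝ) : Complex.polarCoord.symm p = circleMap 0 p.1 p.2 := by
    rw [Complex.polarCoord_symm_apply, circleMap_zero, Complex.exp_mul_I,
      Complex.ofReal_cos, Complex.ofReal_sin]
  rw [← Complex.lintegral_comp_polarCoord_symm, polarCoord_target, Measure.volume_eq_prod]
  simp only [hsymm, smul_eq_mul]
  rw [setLIntegral_prod _ (by fun_prop)]
  refine setLIntegral_congr_fun measurableSet_Ioi fun s _ => ?_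
  have hpi : ENNReal.ofReal (2 * π) ≠ 0 := by simp [pi_pos]
  simp only
  rw [lintegral_const_mul _ (by fun_prop), lcircleAverage_eq, mul_comm (2 * π),
    ENNReal.ofReal_mul' two_pi_pos.le, mul_assoc, ENNReal.mul_div_cancel hpi ENNReal.ofReal_ne_top]

lemma setLIntegral_ball_eq_lintegral_lcircleAverage {H : ℂ → ENNReal} {R : ℝ}
    (hH : ContinuousOn H (ball 0 R)) :
    ∫⁻ z in ball 0 R, H z =
      ∫⁻ s in Ioo 0 R, ENNReal.ofReal (2 * π * s) * lcircleAverage H 0 s := by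
  classical
  have hmeas : Measurable ((ball 0 R).indicator H) := by
    rw [← piecewise_eq_indicator]
    exact hH.measurable_piecewise continuousOn_const measurableSet_ball
  rw [← lintegral_indicator measurableSet_ball, lintegral_eq_lintegral_lcircleAverage hmeas,
    ← Ioi_inter_Iio, inter_comm, ← setLIntegral_indicator measurableSet_Iio]
  refine setLIntegral_congr_fun measurableSet_Ioi fun s hs => ?_
  have hmem (θ : ℝ) : circleMap 0 s θ ∈ ball (0 : ℂ) R ↔ s ∈ Iio R := by
    simp [abs_of_pos (mem_Ioi.1 hs)]
  by_cases hsR : s ∈ Iio R <;> simp [lcircleAverage, indicator, hmem, hsR]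

/-! ### The measures `dA_γ` -/

/-- The density of `dA_γ` with respect to Lebesgue measure on the unit disk. Off the disk its values
are meaningless. -/
noncomputable def diskDensity (γ : ℝ) (z : ℂ) : ℝ := (γ - 1) / π * (1 - ‖z‖ ^ 2) ^ (γ - 2)

/-- The measure `dA_γ` on the unit disk, as a measure on `ℂ` carried by the disk; it is a
probability measure for `1 < γ`. -/
noncomputable def diskMeasure (γ : ℝ) : Measure ℂ :=
  (volume.restrict (ball 0 1)).withDensity fun z => ENNReal.ofReal (diskDensity γ z)

section DiskMeasure

variable {γ : ℝ}

lemma one_sub_norm_sq_pos {z : ℂ} (hz : z ∈ ball 0 1) : 0 < 1 - ‖z‖ ^ 2 := by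
  rw [mem_ball_zero_iff] at hz
  nlinarith [norm_nonneg z]

lemma diskDensity_pos (hγ : 1 < γ) {z : ℂ} (hz : z ∈ ball 0 1) : 0 < diskDensity γ z :=
  mul_pos (div_pos (sub_pos.2 hγ) pi_pos) (rpow_pos_of_pos (one_sub_norm_sq_pos hz) _)

lemma continuousOn_diskDensity (γ : ℝ) : ContinuousOn (diskDensity γ) (ball 0 1) :=
  continuousOn_const.mul <| ContinuousOn.rpow_const (by fun_prop) fun _ hz =>
    Or.inl (one_sub_norm_sq_pos hz).ne'

lemma measurable_diskDensity (γ : ℝ) : Measurable (diskDensity γ) := by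
  unfold diskDensity
  fun_prop

lemma lintegral_diskMeasure (γ : ℝ) (H : ℂ → ENNReal) :
    ∫⁻ z, H z ∂diskMeasure γ = ∫⁻ z in ball 0 1, ENNReal.ofReal (diskDensity γ z) * H z :=
  lintegral_withDensity_eq_lintegral_mul_non_measurable _ (measurable_diskDensity γ).ennreal_ofReal
    (ae_of_all _ fun _ => ENNReal.ofReal_lt_top) H

lemma integrable_diskMeasure_iff (hγ : 1 < γ) {u : ℂ → ℝ} :
    Integrable u (diskMeasure γ) ↔ IntegrableOn (fun z => u z * diskDensity γ z) (ball 0 1) := by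
  rw [diskMeasure, integrable_withDensity_iff (measurable_diskDensity γ).ennreal_ofReal
    (ae_of_all _ fun _ => ENNReal.ofReal_lt_top)]
  exact integrableOn_congr_fun
    (fun z hz => by simp only [ENNReal.toReal_ofReal (diskDensity_pos hγ hz).le])
    measurableSet_ball

lemma integral_diskMeasure (hγ : 1 < γ) (u : ℂ → ℝ) :
    ∫ z, u z ∂diskMeasure γ =
      (γ - 1) / π * ∫ z in ball 0 1, u z * (1 - ‖z‖ ^ 2) ^ (γ - 2) := by
  rw [diskMeasure, integral_withDensity_eq_integral_toReal_smul
    (measurable_diskDensity γ).ennreal_ofReal (ae_of_all _ fun _ => ENNReal.ofReal_lt_top),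
    ← integral_const_mul]
  refine setIntegral_congr_fun measurableSet_ball fun z hz => ?_
  simp only [ENNReal.toReal_ofReal (diskDensity_pos hγ hz).le, smul_eq_mul]
  rw [diskDensity]
  ring

lemma integral_norm_rpow_diskMeasure {g : ℂ → ℂ} {q : ℝ} (γ : ℝ) (hq : 0 ≤ q)
    (hg : ContinuousOn g (ball 0 1)) :
    ∫ z, ‖g z‖ ^ q ∂diskMeasure γ = (∫⁻ z, ‖g z‖ₑ ^ q ∂diskMeasure γ).toReal := by
  have hmeas : AEStronglyMeasurable (fun z => ‖g z‖ ^ q) (diskMeasure γ) :=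
    ((hg.norm.rpow_const fun _ _ => Or.inr hq).aestronglyMeasurable measurableSet_ball).mono_ac
      (withDensity_absolutelyContinuous _ _)
  rw [integral_eq_lintegral_of_nonneg_ae (ae_of_all _ fun z => by positivity) hmeas]
  simp only [← ENNReal.ofReal_rpow_of_nonneg (norm_nonneg _) hq, ofReal_norm]

end DiskMeasure

/-! ### Quantiles of the radius -/

/-- The radius `s` for which the annulus `s < ‖z‖ < 1` has `diskMeasure γ`-measure `t`. It solves
`(1 - s ^ 2) ^ (γ - 1) = t`. -/
noncomputable def quantileRadius (γ t : ℝ) : ℝ := √(1 - t ^ (γ - 1)⁻¹)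

section QuantileRadius

variable {γ s t : ℝ}

lemma quantileRadius_one_sub_sq_rpow (hγ : 1 < γ) (hs : s ∈ Ioo 0 1) :
    quantileRadius γ ((1 - s ^ 2) ^ (γ - 1)) = s := by
  have h : 0 ≤ 1 - s ^ 2 := by nlinarith [hs.1, hs.2]
  rw [quantileRadius, rpow_rpow_inv h (by linarith), sub_sub_cancel, sqrt_sq hs.1.le]

lemma rpow_inv_mem_Ioo (hγ : 1 < γ) (ht : t ∈ Ioo 0 1) : t ^ (γ - 1)⁻¹ ∈ Ioo 0 1 :=
  ⟨rpow_pos_of_pos ht.1 _, rpow_lt_one ht.1.le ht.2 (by rw [inv_pos]; linarith)⟩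

lemma quantileRadius_mem_Ioo (hγ : 1 < γ) (ht : t ∈ Ioo 0 1) : quantileRadius γ t ∈ Ioo 0 1 := by
  obtain ⟨h₀, h₁⟩ := rpow_inv_mem_Ioo hγ ht
  refine ⟨sqrt_pos.2 (by linarith), ?_⟩
  rw [quantileRadius, sqrt_lt' one_pos]
  linarith

lemma one_sub_quantileRadius_sq_rpow (hγ : 1 < γ) (ht : t ∈ Ioo 0 1) :
    (1 - quantileRadius γ t ^ 2) ^ (γ - 1) = t := by
  have h := (rpow_inv_mem_Ioo hγ ht).2
  rw [quantileRadius, sq_sqrt (by linarith), sub_sub_cancel, rpow_inv_rpow ht.1.le (by linarith)]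

lemma image_one_sub_sq_rpow_Ioo (hγ : 1 < γ) :
    (fun s : ℝ => (1 - s ^ 2) ^ (γ - 1)) '' Ioo 0 1 = Ioo 0 1 := by
  refine Subset.antisymm (image_subset_iff.2 fun s hs => ?_) fun t ht =>
    ⟨quantileRadius γ t, quantileRadius_mem_Ioo hγ ht, one_sub_quantileRadius_sq_rpow hγ ht⟩
  have h₀ : 0 < 1 - s ^ 2 := by nlinarith [hs.1, hs.2]
  have h₁ : 1 - s ^ 2 < 1 := by nlinarith [hs.1]
  exact ⟨rpow_pos_of_pos h₀ _, rpow_lt_one h₀.le h₁ (by linarith)⟩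

lemma hasDerivAt_one_sub_sq_rpow (γ : ℝ) (hs : s ∈ Ioo 0 1) :
    HasDerivAt (fun s : ℝ => (1 - s ^ 2) ^ (γ - 1))
      (-(2 * (γ - 1) * s * (1 - s ^ 2) ^ (γ - 2))) s := by
  have h : 1 - s ^ 2 ≠ 0 := by nlinarith [hs.1, hs.2]
  convert! ((hasDerivAt_pow 2 s).const_sub 1).rpow_const (p := γ - 1) (Or.inl h) using 1
  rw [sub_sub, one_add_one_eq_two]
  push_cast
  ring

lemma lintegral_comp_quantileRadius (hγ : 1 < γ) (G : ℝ → ENNReal) :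
    ∫⁻ t in Ioo 0 1, G (quantileRadius γ t) =
      ∫⁻ s in Ioo 0 1, ENNReal.ofReal (2 * (γ - 1) * s * (1 - s ^ 2) ^ (γ - 2)) * G s := by
  have hinj : InjOn (fun s : ℝ => (1 - s ^ 2) ^ (γ - 1)) (Ioo 0 1) :=
    LeftInvOn.injOn fun s hs => quantileRadius_one_sub_sq_rpow hγ hs
  conv_lhs => rw [← image_one_sub_sq_rpow_Ioo hγ]
  rw [lintegral_image_eq_lintegral_abs_deriv_mul measurableSet_Ioo
    (fun s hs => (hasDerivAt_one_sub_sq_rpow γ hs).hasDerivWithinAt) hinj]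
  refine setLIntegral_congr_fun measurableSet_Ioo fun s hs => ?_
  have hbase : 0 ≤ 1 - s ^ 2 := by nlinarith [hs.1, hs.2]
  have hnonneg : 0 ≤ 2 * (γ - 1) * s * (1 - s ^ 2) ^ (γ - 2) := by
    have : 0 < γ - 1 := sub_pos.2 hγ
    have := hs.1
    positivity
  simp only [abs_neg, abs_of_nonneg hnonneg, quantileRadius_one_sub_sq_rpow hγ hs]

lemma sqrt_mul_quantileRadius_le {α β : ℝ} (hα : 1 < α) (hαβ : α ≤ β) (ht : t ∈ Ioo 0 1) :
    √((α - 1) / (β - 1)) * quantileRadius α t ≤ quantileRadius β t := by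
  have ha : 0 < α - 1 := sub_pos.2 hα
  have hb : 0 < β - 1 := by linarith
  rw [quantileRadius, quantileRadius, ← sqrt_mul (by positivity)]
  refine sqrt_le_sqrt ?_
  have hpow : (t ^ (β - 1)⁻¹) ^ ((β - 1) / (α - 1)) = t ^ (α - 1)⁻¹ := by
    rw [← rpow_mul ht.1.le]
    congr 1
    field_simp
  have hbernoulli := one_add_mul_self_le_rpow_one_add (s := t ^ (β - 1)⁻¹ - 1)
    (by linarith [rpow_nonneg ht.1.le (β - 1)⁻¹]) ((one_le_div ha).2 (sub_le_sub_right hαβ 1))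
  rw [add_sub_cancel, hpow] at hbernoulli
  rw [div_mul_eq_mul_div, div_le_iff₀ hb]
  have := mul_le_mul_of_nonneg_left hbernoulli ha.le
  rw [mul_add, ← mul_assoc, mul_div_cancel₀ _ ha.ne'] at this
  linarith

end QuantileRadius

lemma lintegral_diskMeasure_eq_lintegral_lcircleAverage {γ : ℝ} (hγ : 1 < γ) {H : ℂ → ENNReal}
    (hH : ContinuousOn H (ball 0 1)) :
    ∫⁻ z, H z ∂diskMeasure γ = ∫⁻ t in Ioo 0 1, lcircleAverage H 0 (quantileRadius γ t) := by
  have hcont : ContinuousOn (fun z => ENNReal.ofReal (diskDensity γ z) * H z) (ball 0 1) :=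
    (ENNReal.continuous_ofReal.comp_continuousOn (continuousOn_diskDensity γ)).ennreal_mul hH
      (fun z hz => Or.inl (ENNReal.ofReal_pos.2 (diskDensity_pos hγ hz)).ne')
      fun _ _ => Or.inr ENNReal.ofReal_ne_top
  rw [lintegral_diskMeasure, setLIntegral_ball_eq_lintegral_lcircleAverage hcont,
    lintegral_comp_quantileRadius hγ (lcircleAverage H 0)]
  refine setLIntegral_congr_fun measurableSet_Ioo fun s hs => ?_
  have hradial : EqOn (fun z => ENNReal.ofReal (diskDensity γ z) * H z)
      (fun z => ENNReal.ofReal (diskDensity γ s) * H z) (sphere 0 |s|) := fun z hz => by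
    simp only [diskDensity, mem_sphere_zero_iff_norm.1 hz, Complex.norm_real, norm_eq_abs]
  have hjacobian : 2 * π * s * diskDensity γ s = 2 * (γ - 1) * s * (1 - s ^ 2) ^ (γ - 2) := by
    rw [diskDensity, Complex.norm_real, norm_eq_abs, sq_abs]
    field_simp
  rw [lcircleAverage_congr hradial, lcircleAverage_const_mul ENNReal.ofReal_ne_top, ← mul_assoc,
    ← ENNReal.ofReal_mul (mul_nonneg two_pi_pos.le hs.1.le), hjacobian]

/-! ### The dilation inequality -/

lemma continuousOn_comp_mul_left_ball {X : Type*} [TopologicalSpace X] {f : ℂ → X} {w : ℂ} {R : ℝ}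
    (hw : ‖w‖ ≤ 1) (hf : ContinuousOn f (ball 0 R)) :
    ContinuousOn (fun z => f (w * z)) (ball 0 R) :=
  hf.comp (continuous_const_mul w).continuousOn fun z hz => by
    rw [mem_ball_zero_iff] at hz ⊢
    exact (norm_mul_le _ _).trans_lt ((mul_le_of_le_one_left (norm_nonneg z) hw).trans_lt hz)

lemma norm_sqrt_sub_one_div_le_one {α β : ℝ} (hα : 1 < α) (hαβ : α ≤ β) :
    ‖(√((α - 1) / (β - 1)) : ℂ)‖ ≤ 1 := by
  rw [Complex.norm_real, norm_of_nonneg (sqrt_nonneg _)]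
  exact sqrt_le_one.2 (div_le_one_of_le₀ (by linarith) (by linarith))

lemma lcircleAverage_enorm_rpow_dilation_le {f : ℂ → ℂ} {w : ℂ} {s R q : ℝ} (hq : 0 ≤ q)
    (hs : 0 ≤ s) (hwR : ‖w‖ * s ≤ R) (hf : DiffContOnCl ℂ f (ball 0 R)) :
    lcircleAverage (fun z => ‖f (w * z)‖ₑ ^ q) 0 s ≤ lcircleAverage (fun z => ‖f z‖ₑ ^ q) 0 R := by
  have hws : 0 ≤ ‖w‖ * s := by positivity
  have hcont : ContinuousOn f (closedBall 0 R) := hf.continuousOn_ball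
  rw [lcircleAverage_enorm_rpow hq, lcircleAverage_enorm_rpow hq,
    circleAverage_comp_mul_left (fun z => ‖f z‖ ^ q), mul_zero]
  · gcongr
    exact circleAverage_norm_rpow_le hws hwR hq hf
  · rw [abs_of_nonneg (hws.trans hwR)]
    exact hcont.mono sphere_subset_closedBall
  · refine hcont.comp (continuous_const_mul w).continuousOn fun z hz => ?_
    rw [mem_sphere_zero_iff_norm, abs_of_nonneg hs] at hz
    rwa [mem_closedBall_zero_iff, norm_mul, hz]

theorem lintegral_diskMeasure_dilation_le {f : ℂ → ℂ} {q α β : ℝ} (hq : 0 ≤ q) (hα : 1 < α)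
    (hαβ : α ≤ β) (hf : DifferentiableOn ℂ f (ball 0 1)) :
    ∫⁻ z, ‖f (√((α - 1) / (β - 1)) * z)‖ₑ ^ q ∂diskMeasure α ≤
      ∫⁻ z, ‖f z‖ₑ ^ q ∂diskMeasure β := by
  have hβ : 1 < β := hα.trans_le hαβ
  have hcont : ContinuousOn (fun z => ‖f z‖ₑ ^ q) (ball 0 1) :=
    ENNReal.continuous_rpow_const.comp_continuousOn hf.continuousOn.enorm
  rw [lintegral_diskMeasure_eq_lintegral_lcircleAverage hα
      (continuousOn_comp_mul_left_ball (norm_sqrt_sub_one_div_le_one hα hαβ) hcont),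
    lintegral_diskMeasure_eq_lintegral_lcircleAverage hβ hcont]
  refine setLIntegral_mono' measurableSet_Ioo fun t ht => ?_
  have hclosure : closure (ball 0 (quantileRadius β t)) ⊆ ball (0 : ℂ) 1 :=
    closure_ball_subset_closedBall.trans
      (closedBall_subset_ball (quantileRadius_mem_Ioo hβ ht).2)
  refine lcircleAverage_enorm_rpow_dilation_le hq (quantileRadius_mem_Ioo hα ht).1.le ?_
    (hf.mono hclosure).diffContOnCl
  rw [Complex.norm_real, norm_of_nonneg (sqrt_nonneg _)]
  exact sqrt_mul_quantileRadius_le hα hαβ ht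

theorem integral_diskMeasure_dilation_le {f : ℂ → ℂ} {q α β : ℝ} (hq : 0 ≤ q) (hα : 1 < α)
    (hαβ : α ≤ β) (hf : DifferentiableOn ℂ f (ball 0 1))
    (hfq : Integrable (fun z => ‖f z‖ ^ q) (diskMeasure β)) :
    ∫ z, ‖f (√((α - 1) / (β - 1)) * z)‖ ^ q ∂diskMeasure α ≤
      ∫ z, ‖f z‖ ^ q ∂diskMeasure β := by
  rw [integral_norm_rpow_diskMeasure α hq (continuousOn_comp_mul_left_ball
      (norm_sqrt_sub_one_div_le_one hα hαβ) hf.continuousOn),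
    integral_norm_rpow_diskMeasure β hq hf.continuousOn]
  refine ENNReal.toReal_mono ?_ (lintegral_diskMeasure_dilation_le hq hα hαβ hf)
  simpa only [← ENNReal.ofReal_rpow_of_nonneg (norm_nonneg _) hq, ofReal_norm] using
    hfq.lintegral_lt_top.ne

end

theorem weighted_dilation_inequality_any_q
    (q α β : ℝ) (hq : 0 < q) (hα : 1 < α) (hαβ : α < β)
    (f : ℂ → ℂ) (hf : DifferentiableOn ℂ f (ball (0 : ℂ) 1))
    (hfq : IntegrableOn
      (fun z => ‖f z‖ ^ q * ((β - 1) / Real.pi * (1 - ‖z‖ ^ 2) ^ (β - 2)))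
      (ball (0 : ℂ) 1)) :
    (α - 1) / Real.pi *
        ∫ z in ball (0 : ℂ) 1,
          ‖f ((Real.sqrt ((α - 1) / (β - 1)) : ℂ) * z)‖ ^ q * (1 - ‖z‖ ^ 2) ^ (α - 2) ≤
      (β - 1) / Real.pi *
        ∫ z in ball (0 : ℂ) 1, ‖f z‖ ^ q * (1 - ‖z‖ ^ 2) ^ (β - 2) := by
  have hβ : 1 < β := hα.trans hαβ
  rw [← integral_diskMeasure hα fun z => ‖f (Real.sqrt ((α - 1) / (β - 1)) * z)‖ ^ q,
    ← integral_diskMeasure hβ fun z => ‖f z‖ ^ q]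
  exact integral_diskMeasure_dilation_le hq.le hα hαβ.le hf
    ((integrable_diskMeasure_iff hβ).2 hfq)
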